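/- Let A be a symmetric n×n real matrix with nonnegative entries, with positive degrees d_i = ∑_j A_{ij}, D = diag(d_1,…,d_n), σ ∈ ℝ, K = σ D^{−1} + D^{−1} A D^{−1}, and weights w_i = d_i. Then for any λ ∈ ℝ and any partition {V_1, …, V_k} of the vertices into k nonempty clusters, J(K, W) + λ k = C + Cut(A) + λ′ k, where C = σ n + tr( D^{−1/2} A D^{−1/2} ) is a constant independent of the partition and λ′ = λ − σ − 1. (Hence optimizing the penalized weighted kernel k-means objective with parameter λ is equivalent to optimizing the penalized normalized cut objective Cut(A) + λ′ k with λ′ = λ − σ − 1.) -/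

import Mathlib

open Finset Matrix

/-!
The kernel satisfies `D K D = σ D + A`, and the edges leaving a cluster together with those inside
it account for its volume. Hence in a cluster `s` the term subtracted in the `k`-means objective is
`σ + links(s, s) / vol(s) = σ + 1 - links(s, sᶜ) / vol(s)`, while the remaining terms add up to
`tr (D K) = σ n + tr (D⁻¹ A)`, whatever the clustering.
-/

section Definitions

variable {ι κ F : Type*} [Fintype ι] [DecidableEq ι] [DecidableEq κ] [Field F]

/-- The total weight of the edges from `s` to `t` in the weighted graph with adjacency matrix `A`,
written `links(s, t)` in the graph clustering literature. -/
def links {M : Type*} [AddCommMonoid M] (A : Matrix ι ι M) (s t : Finset ι) : M :=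
  ∑ i ∈ s, ∑ j ∈ t, A i j

/-- The cluster of label `c`, for a clustering encoded by its labelling `z` of the vertices. -/
def cluster (z : ι → κ) (c : κ) : Finset ι :=
  univ.filter fun i => z i = c

/-- The weighted kernel `k`-means objective `J(K, diag w)`, with the distances to the weighted
cluster centroids expanded in terms of the kernel matrix `K`. -/
def kernelKMeansObjective [Fintype κ] (w : ι → F) (K : Matrix ι ι F) (z : ι → κ) : F :=
  ∑ c, ((∑ i ∈ cluster z c, w i * K i i)
    - (∑ i ∈ cluster z c, ∑ j ∈ cluster z c, w i * w j * K i j) / ∑ i ∈ cluster z c, w i)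

/-- The normalized cut of a clustering of the graph with adjacency matrix `A`, where the volume of
a cluster is measured by the vertex weights `d` (its degrees, for the usual normalized cut). -/
def normalizedCut [Fintype κ] (A : Matrix ι ι F) (d : ι → F) (z : ι → κ) : F :=
  ∑ c, links A (cluster z c) (cluster z c)ᶜ / ∑ i ∈ cluster z c, d i

/-- The kernel `σ D⁻¹ + D⁻¹ A D⁻¹`, `D = diag d`, that turns weighted kernel `k`-means into
normalized cut; a large shift `σ` serves to make it positive semidefinite. -/
def normalizedCutKernel (A : Matrix ι ι F) (d : ι → F) (σ : F) : Matrix ι ι F :=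
  σ • diagonal (fun i => (d i)⁻¹) + diagonal (fun i => (d i)⁻¹) * A * diagonal fun i => (d i)⁻¹

end Definitions

section AddCommMonoid

variable {ι κ M : Type*} [Fintype ι] [AddCommMonoid M] {d : ι → M}

theorem links_self_add_links_compl [DecidableEq ι] {A : Matrix ι ι M}
    (hd : ∀ i, d i = ∑ j, A i j) (s : Finset ι) :
    links A s s + links A s sᶜ = ∑ i ∈ s, d i := by
  simp only [links, ← sum_add_distrib, sum_add_sum_compl, hd]

theorem sum_cluster_pos [PartialOrder M] [IsOrderedCancelAddMonoid M] [DecidableEq κ]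
    (hd : ∀ i, 0 < d i) {z : ι → κ} (hz : Function.Surjective z) (c : κ) :
    0 < ∑ i ∈ cluster z c, d i := by
  obtain ⟨i, hi⟩ := hz c
  exact sum_pos (fun j _ => hd j) ⟨i, mem_filter.mpr ⟨mem_univ i, hi⟩⟩

end AddCommMonoid

section Field

variable {ι κ F : Type*} [Fintype ι] [DecidableEq ι] [Fintype κ] [DecidableEq κ] [Field F]
  {A : Matrix ι ι F} {d : ι → F}

theorem kernelKMeansObjective_eq_trace_sub (w : ι → F) (K : Matrix ι ι F) (z : ι → κ) :
    kernelKMeansObjective w K z = trace (diagonal w * K)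
      - ∑ c, (∑ i ∈ cluster z c, ∑ j ∈ cluster z c, w i * w j * K i j)
        / ∑ i ∈ cluster z c, w i := by
  have diagonal_terms : ∑ c, ∑ i ∈ cluster z c, w i * K i i = trace (diagonal w * K) := by
    simp only [cluster, sum_fiberwise, trace, diag_apply, diagonal_mul]
  rw [kernelKMeansObjective, sum_sub_distrib, diagonal_terms]

theorem diagonal_mul_normalizedCutKernel (hd₀ : ∀ i, d i ≠ 0) (A : Matrix ι ι F) (σ : F) :
    diagonal d * normalizedCutKernel A d σ = σ • 1 + A * diagonal fun i => (d i)⁻¹ := by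
  have cancel : diagonal d * diagonal (fun i => (d i)⁻¹) = 1 := by
    simp only [diagonal_mul_diagonal, mul_inv_cancel₀ (hd₀ _), diagonal_one]
  rw [normalizedCutKernel, mul_add, Matrix.mul_smul, cancel, ← mul_assoc, ← mul_assoc, cancel,
    one_mul]

theorem diagonal_mul_normalizedCutKernel_mul_diagonal (hd₀ : ∀ i, d i ≠ 0) (A : Matrix ι ι F)
    (σ : F) :
    diagonal d * normalizedCutKernel A d σ * diagonal d = σ • diagonal d + A := by
  have cancel : diagonal (fun i => (d i)⁻¹) * diagonal d = 1 := by
    simp only [diagonal_mul_diagonal, inv_mul_cancel₀ (hd₀ _), diagonal_one]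
  rw [diagonal_mul_normalizedCutKernel hd₀, add_mul, Matrix.smul_mul, one_mul, mul_assoc, cancel,
    mul_one]

theorem trace_diagonal_mul_normalizedCutKernel (hd₀ : ∀ i, d i ≠ 0) (A : Matrix ι ι F) (σ : F) :
    trace (diagonal d * normalizedCutKernel A d σ)
      = σ * Fintype.card ι + trace (diagonal (fun i => (d i)⁻¹) * A) := by
  rw [diagonal_mul_normalizedCutKernel hd₀, trace_add, trace_smul, trace_one, trace_mul_comm,
    smul_eq_mul]

theorem sum_sum_mul_normalizedCutKernel (hd₀ : ∀ i, d i ≠ 0) (A : Matrix ι ι F) (σ : F)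
    (s : Finset ι) :
    ∑ i ∈ s, ∑ j ∈ s, d i * d j * normalizedCutKernel A d σ i j
      = σ * ∑ i ∈ s, d i + links A s s := by
  have entry (i j : ι) :
      d i * d j * normalizedCutKernel A d σ i j = σ * diagonal d i j + A i j := by
    rw [mul_right_comm, ← diagonal_mul, ← mul_diagonal,
      diagonal_mul_normalizedCutKernel_mul_diagonal hd₀, Matrix.add_apply, Matrix.smul_apply,
      smul_eq_mul]
  have diagonal_row (i : ι) (hi : i ∈ s) : ∑ j ∈ s, diagonal d i j = d i := by
    simp only [diagonal_apply, sum_ite_eq, if_pos hi]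
  simp only [entry, sum_add_distrib, ← mul_sum, links, sum_congr rfl diagonal_row]

theorem sum_sum_mul_normalizedCutKernel_div (hd : ∀ i, d i = ∑ j, A i j) (hd₀ : ∀ i, d i ≠ 0)
    (σ : F) {s : Finset ι} (hs : ∑ i ∈ s, d i ≠ 0) :
    (∑ i ∈ s, ∑ j ∈ s, d i * d j * normalizedCutKernel A d σ i j) / ∑ i ∈ s, d i
      = σ + 1 - links A s sᶜ / ∑ i ∈ s, d i := by
  rw [sum_sum_mul_normalizedCutKernel hd₀, eq_sub_of_add_eq (links_self_add_links_compl hd s)]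
  field_simp
  ring

theorem penalized_kernel_kmeans_eq_penalized_normalized_cut_general
    (hd : ∀ i, d i = ∑ j, A i j) (hd₀ : ∀ i, d i ≠ 0) {z : ι → κ}
    (hz : ∀ c, ∑ i ∈ cluster z c, d i ≠ 0) (σ lam : F) :
    kernelKMeansObjective d (normalizedCutKernel A d σ) z + lam * Fintype.card κ
      = σ * Fintype.card ι + trace (diagonal (fun i => (d i)⁻¹) * A)
        + normalizedCut A d z + (lam - σ - 1) * Fintype.card κ := by
  have centroid_terms : ∑ c, (∑ i ∈ cluster z c, ∑ j ∈ cluster z c,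
        d i * d j * normalizedCutKernel A d σ i j) / ∑ i ∈ cluster z c, d i
      = Fintype.card κ * (σ + 1) - normalizedCut A d z := by
    simp only [sum_sum_mul_normalizedCutKernel_div hd hd₀ σ (hz _), sum_sub_distrib, sum_const,
      card_univ, nsmul_eq_mul, normalizedCut]
  rw [kernelKMeansObjective_eq_trace_sub, trace_diagonal_mul_normalizedCutKernel hd₀,
    centroid_terms]
  ring

end Field

theorem trace_inv_sqrt_mul_mul_inv_sqrt {ι : Type*} [Fintype ι] [DecidableEq ι] {d : ι → ℝ}
    (hd : ∀ i, 0 ≤ d i) (A : Matrix ι ι ℝ) :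
    trace (diagonal (fun i => (√(d i))⁻¹) * A * diagonal fun i => (√(d i))⁻¹)
      = trace (diagonal (fun i => (d i)⁻¹) * A) := by
  rw [trace_mul_comm, ← mul_assoc, diagonal_mul_diagonal]
  simp only [← mul_inv, Real.mul_self_sqrt (hd _)]

/-- Penalized equivalence of weighted kernel k-means and normalized cut: with
`K = σ D⁻¹ + D⁻¹ A D⁻¹` and weights `w i = d i`, for every clustering into `k`
nonempty clusters (the fibers of the surjective map `z`) and every `λ`,
`J(K, W) + λ k = C + Cut(A) + λ' k`, where
`C = σ n + tr (D^{-1/2} A D^{-1/2})` is independent of the clustering and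
`λ' = λ - σ - 1`. -/
theorem penalized_kernel_kmeans_eq_penalized_normalized_cut
    (n k : ℕ)
    (A : Matrix (Fin n) (Fin n) ℝ) (hA : A.IsSymm)
    (hApos : ∀ i j, 0 ≤ A i j)
    (deg : Fin n → ℝ) (hdeg : ∀ i, deg i = ∑ j, A i j)
    (hdegpos : ∀ i, 0 < deg i)
    (σ : ℝ)
    (K : Matrix (Fin n) (Fin n) ℝ)
    (hK : K = σ • Matrix.diagonal (fun i => (deg i)⁻¹)
        + Matrix.diagonal (fun i => (deg i)⁻¹) * A * Matrix.diagonal (fun i => (deg i)⁻¹))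
    (lam : ℝ)
    (z : Fin n → Fin k) (hz : Function.Surjective z) :
    (∑ c, ((∑ i ∈ Finset.univ.filter (fun i => z i = c), deg i * K i i)
        - (∑ i ∈ Finset.univ.filter (fun i => z i = c),
            ∑ j ∈ Finset.univ.filter (fun j => z j = c), deg i * deg j * K i j)
          / (∑ i ∈ Finset.univ.filter (fun i => z i = c), deg i)))
      + lam * (k : ℝ)
    = (σ * (n : ℝ)
        + Matrix.trace (Matrix.diagonal (fun i => (Real.sqrt (deg i))⁻¹) * A
            * Matrix.diagonal (fun i => (Real.sqrt (deg i))⁻¹)))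
      + (∑ c, (∑ i ∈ Finset.univ.filter (fun i => z i = c),
            ∑ j ∈ Finset.univ.filter (fun j => z j ≠ c), A i j)
          / (∑ i ∈ Finset.univ.filter (fun i => z i = c), deg i))
      + (lam - σ - 1) * (k : ℝ) := by
  rw [hK, trace_inv_sqrt_mul_mul_inv_sqrt fun i => (hdegpos i).le]
  simpa only [kernelKMeansObjective, normalizedCut, normalizedCutKernel, links, cluster,
    compl_filter, Fintype.card_fin] using
    penalized_kernel_kmeans_eq_penalized_normalized_cut_general hdeg (fun i => (hdegpos i).ne')
      (fun c => (sum_cluster_pos hdegpos hz c).ne') σ lam
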